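/- The generating function of unrestricted rigged configurations by cocharge admits the explicit fermionic (Gaussian-binomial) form: Σ_{(ν,J) ∈ RC(λ,B)} q^{cc(ν,J)} = Σ_{m} q^{cc(m) + Σ_{a,j} M_j^{(a)} m_j^{(a)}} Π_{a=1}^{n-1} Π_{j ≥ 1} [ (p_j^{(a)} − M_j^{(a)} + m_j^{(a)}) choose m_j^{(a)} ]_q, where the outer sum runs over all collections of nonnegative integers m = (m_j^{(a)}) satisfying the size constraints Σ_{j} j·m_j^{(a)} = Σ_{i=1}^L s_i min(r_i,a) − Σ_{k=1}^a λ_k and the nonnegativity p_j^{(a)} − M_j^{(a)} ≥ 0 for all a,j with m_j^{(a)} > 0. -/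

import Mathlib

open scoped BigOperators

/-- A (raw) rigged configuration for type `A_{n-1}`: a sequence of partitions
`ν^{(1)},…,ν^{(n-1)}` together with an integer rigging attached to each part;
component `a : Fin (n-1)` is the multiset of pairs `(length of part, rigging)`. -/
abbrev RCConf (n : ℕ) := Fin (n - 1) → Multiset (ℕ × ℤ)

/-- The Cartan matrix pairing `(α_a | α_b)` of `A_{n-1}`:
`2` if `a = b`, `-1` if `|a-b| = 1`, `0` otherwise. -/
def cartan (a b : ℕ) : ℤ := if a = b then 2 else if a + 1 = b ∨ b + 1 = a then -1 else 0

/-- The vacancy numbers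
`p_j^{(a)}(ν) = ∑_{i=1}^L min(j,s_i) δ_{a,r_i} − ∑_b (α_a|α_b) ∑_{k≥1} min(j,k) m_k^{(b)}`.
(The index `a : Fin (n-1)` encodes the root index `a+1 ∈ {1,…,n-1}`, and
`∑_k min(j,k) m_k^{(b)}` is computed as the sum of `min(j, length)` over the
parts of `ν^{(b)}`.) -/
def vac (n L : ℕ) (r s : Fin L → ℕ) (ν : RCConf n) (a : Fin (n - 1)) (j : ℕ) : ℤ :=
  (∑ i, if r i = a.1 + 1 then (min j (s i) : ℤ) else 0)
    - ∑ b : Fin (n - 1), cartan (a.1 + 1) (b.1 + 1) *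
        ((ν b).map fun p => (min j p.1 : ℤ)).sum

/-- The size constraint `|ν^{(a)}| = ∑_{i=1}^L s_i min(r_i,a) − ∑_{j=1}^{a} λ_j`. -/
def sizeEq (n L : ℕ) (r s : Fin L → ℕ) (lam : Fin n → ℤ) (ν : RCConf n) : Prop :=
  ∀ a : Fin (n - 1),
    ((ν a).map fun p => (p.1 : ℤ)).sum
      = (∑ i, (s i : ℤ) * min (r i : ℤ) (a.1 + 1))
        - ∑ k : Fin n, (if k.1 ≤ a.1 then lam k else 0)

/-- `IsURC n L r s M lam ν` : `ν` is an unrestricted rigged configuration in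
`RC(λ,B)`: all parts have positive length, the sizes `|ν^{(a)}|` are as
prescribed by `λ` and `B`, and each rigging `x` of a part of length `j` of
`ν^{(a)}` satisfies `M_j^{(a)} ≤ x ≤ p_j^{(a)}(ν)` where `M` is the given
lower bound (for the Deka–Schilling lower bound this is exactly the set of
unrestricted rigged configurations). -/
def IsURC (n L : ℕ) (r s : Fin L → ℕ) (M : Fin (n - 1) → ℕ → ℤ) (lam : Fin n → ℤ)
    (ν : RCConf n) : Prop :=
  (∀ a, ∀ p ∈ ν a, 1 ≤ p.1) ∧ sizeEq n L r s lam ν ∧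
    (∀ a, ∀ p ∈ ν a, M a p.1 ≤ p.2 ∧ p.2 ≤ vac n L r s ν a p.1)

/-- `cc(ν) = ½ ∑_{a,b} ∑_{j,k} (α_a|α_b) min(j,k) m_j^{(a)} m_k^{(b)}`
(the double sum is always even, so integer division by 2 is exact). -/
def ccShape (n : ℕ) (ν : RCConf n) : ℤ :=
  (∑ a : Fin (n - 1), ∑ b : Fin (n - 1), cartan (a.1 + 1) (b.1 + 1) *
      ((ν a).map fun p => ((ν b).map fun q => (min p.1 q.1 : ℤ)).sum).sum) / 2

/-- The cocharge `cc(ν,J) = cc(ν) + |J|`, where `|J|` is the sum of all riggings. -/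
def cc (n : ℕ) (ν : RCConf n) : ℤ :=
  ccShape n ν + ∑ a : Fin (n - 1), ((ν a).map Prod.snd).sum

/-- Gaussian binomial coefficient `[n choose k]_q` as a polynomial in `q`, via
the Pascal recurrence `[n+1, k+1]_q = [n, k]_q + q^(k+1) [n, k+1]_q`; it is the
generating function of partitions inside a `k × (n-k)` box, and equals
`(q)_n / ((q)_k (q)_{n-k})`. -/
noncomputable def qbinomPoly : ℕ → ℕ → Polynomial ℤ
  | 0, 0 => 1
  | 0, _ + 1 => 0
  | _ + 1, 0 => 1
  | n + 1, k + 1 => qbinomPoly n k + (Polynomial.X) ^ (k + 1) * qbinomPoly n (k + 1)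

/-- The vacancy numbers expressed in terms of the multiplicity data
`m = (m_j^{(a)})`:
`p_j^{(a)}(m) = ∑_i min(j,s_i) δ_{a,r_i} − ∑_b (α_a|α_b) ∑_{k≥1} min(j,k) m_k^{(b)}`. -/
noncomputable def vacM (n L : ℕ) (r s : Fin L → ℕ) (m : Fin (n - 1) → ℕ → ℕ) (a : Fin (n - 1)) (j : ℕ) : ℤ :=
  (∑ i, if r i = a.1 + 1 then (min j (s i) : ℤ) else 0)
    - ∑ b : Fin (n - 1), cartan (a.1 + 1) (b.1 + 1) * ∑ᶠ k : ℕ, (min j k : ℤ) * m b k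

/-- `cc(m) = ½ ∑_{a,b} ∑_{j,k} (α_a|α_b) min(j,k) m_j^{(a)} m_k^{(b)}`. -/
noncomputable def ccM (n : ℕ) (m : Fin (n - 1) → ℕ → ℕ) : ℤ :=
  (∑ a : Fin (n - 1), ∑ b : Fin (n - 1), cartan (a.1 + 1) (b.1 + 1) *
      ∑ᶠ j : ℕ, ∑ᶠ k : ℕ, (min j k : ℤ) * m a j * m b k) / 2

open LaurentPolynomial in
theorem rc_T_sum {ι : Type*} (s : Finset ι) (f : ι → ℤ) :
    (T (∑ i ∈ s, f i) : LaurentPolynomial ℤ) = ∏ i ∈ s, T (f i) := by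
  classical
  induction s using Finset.induction_on with
  | empty => simp
  | insert a s ha ih => rw [Finset.sum_insert ha, Finset.prod_insert ha, T_add, ih]

theorem rc_qb_zero (n : ℕ) : qbinomPoly n 0 = 1 := by
  cases n <;> simp [qbinomPoly]

theorem rc_qb_lt : ∀ (n k : ℕ), n < k → qbinomPoly n k = 0
  | 0, 0, h => by omega
  | 0, k + 1, _ => by simp [qbinomPoly]
  | n + 1, 0, h => by omega
  | n + 1, k + 1, h => by
    rw [qbinomPoly, rc_qb_lt n k (by omega), rc_qb_lt n (k + 1) (by omega)]; simp

/-- multisets of size `k` with entries in `[lo, lo + c)`. -/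
noncomputable def rcMs (lo : ℤ) (c : ℕ) (k : ℕ) : Finset (Multiset ℤ) :=
  match c, k with
  | _, 0 => {0}
  | 0, _ + 1 => ∅
  | c + 1, k + 1 => (rcMs lo (c + 1) k).image (fun R => lo ::ₘ R) ∪ rcMs (lo + 1) c (k + 1)
termination_by c + k

theorem rc_mem_ms (lo : ℤ) (c k : ℕ) (R : Multiset ℤ) :
    R ∈ rcMs lo c k ↔ R.card = k ∧ ∀ x ∈ R, lo ≤ x ∧ x < lo + c := by
  match c, k with
  | c, 0 =>
    rw [rcMs]
    simp only [Finset.mem_singleton, Multiset.card_eq_zero]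
    constructor
    · rintro rfl; simp
    · exact fun h => h.1
  | 0, k + 1 =>
    rw [rcMs]
    simp only [Finset.notMem_empty, false_iff]
    rintro ⟨h1, h2⟩
    obtain ⟨x, hx⟩ := Multiset.card_pos_iff_exists_mem.1 (by omega : 0 < R.card)
    have := h2 x hx
    push_cast at this
    omega
  | c + 1, k + 1 =>
    rw [rcMs]
    simp only [Finset.mem_union, Finset.mem_image]
    rw [rc_mem_ms (lo + 1) c (k + 1)]
    constructor
    · rintro (⟨R', hR', rfl⟩ | ⟨h1, h2⟩)
      · rw [rc_mem_ms lo (c + 1) k] at hR'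
        refine ⟨by simp [hR'.1], ?_⟩
        intro x hx
        rcases Multiset.mem_cons.1 hx with rfl | hx
        · push_cast; omega
        · exact hR'.2 x hx
      · refine ⟨h1, fun x hx => ?_⟩
        have := h2 x hx
        push_cast; omega
    · rintro ⟨h1, h2⟩
      by_cases hlo : lo ∈ R
      · left
        obtain ⟨R', rfl⟩ := Multiset.exists_cons_of_mem hlo
        refine ⟨R', ?_, rfl⟩
        rw [rc_mem_ms lo (c + 1) k]
        exact ⟨by simpa using h1, fun x hx => h2 x (Multiset.mem_cons_of_mem hx)⟩
      · right
        refine ⟨h1, fun x hx => ?_⟩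
        have := h2 x hx
        have hne : x ≠ lo := fun h => hlo (h ▸ hx)
        push_cast at this
        omega
termination_by c + k

open LaurentPolynomial in
theorem rc_sum_ms (lo : ℤ) (c k : ℕ) :
    (∑ R ∈ rcMs lo c k, (T R.sum : LaurentPolynomial ℤ))
      = T (lo * k) * Polynomial.toLaurent (qbinomPoly (c + k - 1) k) := by
  match c, k with
  | c, 0 => rw [rcMs]; simp [rc_qb_zero]
  | 0, k + 1 => rw [rcMs, rc_qb_lt _ _ (by omega)]; simp
  | c + 1, k + 1 =>
    rw [rcMs, Finset.sum_union, Finset.sum_image, rc_sum_ms (lo + 1) c (k + 1)]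
    · simp only [Multiset.sum_cons, T_add]
      rw [← Finset.mul_sum, rc_sum_ms lo (c + 1) k]
      rw [show c + 1 + (k + 1) - 1 = (c + k) + 1 by omega, qbinomPoly,
        show c + 1 + k - 1 = c + k by omega, show c + (k + 1) - 1 = c + k by omega]
      rw [map_add, map_mul, map_pow, Polynomial.toLaurent_X, T_pow]
      rw [← mul_assoc, ← T_add, mul_add, ← mul_assoc, ← T_add]
      congr 3
      · push_cast; ring
      · push_cast; ring
    · intro a _ b _ h
      simpa using h
    · rw [Finset.disjoint_left]
      intro R h1 h2
      rw [Finset.mem_image] at h1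
      obtain ⟨R', _, rfl⟩ := h1
      rw [rc_mem_ms] at h2
      have := h2.2 lo (Multiset.mem_cons_self _ _)
      omega
termination_by c + k

theorem rc_sum_count (s : Multiset ℕ) (f : ℕ → ℤ) :
    (s.map f).sum = ∑ᶠ k, f k * (s.count k : ℤ) := by
  rw [Finset.sum_multiset_map_count, finsum_eq_sum_of_support_subset (s := s.toFinset)]
  · refine Finset.sum_congr rfl fun x _ => ?_
    rw [nsmul_eq_mul, mul_comm]
  · intro k hk
    simp only [Function.mem_support, ne_eq, mul_eq_zero, not_or, Nat.cast_eq_zero] at hk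
    simpa using Multiset.count_ne_zero.1 hk.2

/-- multiplicities. -/
def rcMult {n : ℕ} (ν : RCConf n) (a : Fin (n - 1)) (j : ℕ) : ℕ :=
  ((ν a).map Prod.fst).count j

theorem rc_map_eq {n : ℕ} (ν : RCConf n) (a : Fin (n - 1)) (f : ℕ → ℤ) :
    ((ν a).map fun p => f p.1).sum = ∑ᶠ k, f k * (rcMult ν a k : ℤ) := by
  simp only [rcMult]
  rw [← rc_sum_count, Multiset.map_map]; rfl

theorem rc_vac_eq (n L : ℕ) (r s : Fin L → ℕ) (ν : RCConf n) (a : Fin (n - 1)) (j : ℕ) :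
    vac n L r s ν a j = vacM n L r s (rcMult ν) a j := by
  unfold vac vacM
  congr 1
  refine Finset.sum_congr rfl fun b _ => ?_
  congr 1
  exact rc_map_eq ν b (fun k => (min j k : ℤ))

theorem rc_cc_eq (n : ℕ) (ν : RCConf n) : ccShape n ν = ccM n (rcMult ν) := by
  unfold ccShape ccM
  congr 1
  refine Finset.sum_congr rfl fun a _ => Finset.sum_congr rfl fun b _ => ?_
  congr 1
  rw [rc_map_eq ν a (fun j => ((ν b).map fun q => (min j q.1 : ℤ)).sum)]
  refine finsum_congr fun j => ?_
  rw [← Multiset.sum_map_mul_right]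
  exact rc_map_eq ν b (fun k => (min j k : ℤ) * (rcMult ν a j : ℤ))

/-- Assemble. -/
def rcPhi (n N : ℕ) (x : Fin (n - 1) × Fin N → Multiset ℤ) : RCConf n :=
  fun a => ∑ j : Fin N, (x (a, j)).map (fun y => (j.1, y))

theorem rc_count_phi (n N : ℕ) (x : Fin (n - 1) × Fin N → Multiset ℤ) (a : Fin (n - 1))
    (j : Fin N) (y : ℤ) : (rcPhi n N x a).count (j.1, y) = (x (a, j)).count y := by
  unfold rcPhi
  rw [Multiset.count_sum', Finset.sum_eq_single j]
  · exact Multiset.count_map_eq_count' (fun y => (j.1, y)) _ (fun u v h => by simpa using h) y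
  · intro b _ hb
    rw [Multiset.count_eq_zero]
    intro h
    obtain ⟨z, _, hz⟩ := Multiset.mem_map.1 h
    exact hb (Fin.ext (Prod.ext_iff.1 hz).1)
  · simp

theorem rc_phi_inj (n N : ℕ) : Function.Injective (rcPhi n N) := by
  intro x x' h
  funext ⟨a, j⟩
  ext y
  rw [← rc_count_phi, ← rc_count_phi, h]

theorem rc_mult_phi (n N : ℕ) (x : Fin (n - 1) × Fin N → Multiset ℤ) (a : Fin (n - 1)) (k : ℕ) :
    rcMult (rcPhi n N x) a k = if h : k < N then (x (a, ⟨k, h⟩)).card else 0 := by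
  unfold rcMult rcPhi
  have h1 := map_sum (Multiset.mapAddMonoidHom (Prod.fst : ℕ × ℤ → ℕ))
    (fun j : Fin N => (x (a, j)).map (fun y => (j.1, y))) Finset.univ
  simp only [Multiset.coe_mapAddMonoidHom] at h1
  rw [h1, Multiset.count_sum']
  simp only [Multiset.map_map, Function.comp_def, Multiset.map_const', Multiset.count_replicate]
  split_ifs with h
  · rw [Finset.sum_eq_single ⟨k, h⟩]
    · simp
    · intro b _ hb
      rw [if_neg]
      intro hh; exact hb (Fin.ext hh)
    · simp
  · refine Finset.sum_eq_zero fun j _ => ?_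
    rw [if_neg]
    have := j.2
    omega

theorem rc_rig_phi (n N : ℕ) (x : Fin (n - 1) × Fin N → Multiset ℤ) (a : Fin (n - 1)) :
    ((rcPhi n N x a).map Prod.snd).sum = ∑ j, (x (a, j)).sum := by
  unfold rcPhi
  have h1 := map_sum (Multiset.mapAddMonoidHom (Prod.snd : ℕ × ℤ → ℤ))
    (fun j : Fin N => (x (a, j)).map (fun y => (j.1, y))) Finset.univ
  simp only [Multiset.coe_mapAddMonoidHom] at h1
  rw [h1, Multiset.sum_sum]
  simp [Multiset.map_map, Function.comp_def]

theorem rc_mem_phi (n N : ℕ) (x : Fin (n - 1) × Fin N → Multiset ℤ) (a : Fin (n - 1))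
    (p : ℕ × ℤ) : p ∈ rcPhi n N x a ↔ ∃ h : p.1 < N, p.2 ∈ x (a, ⟨p.1, h⟩) := by
  unfold rcPhi
  simp only [Multiset.mem_sum, Multiset.mem_map, Finset.mem_univ, true_and]
  constructor
  · rintro ⟨j, y, hy, rfl⟩
    exact ⟨j.2, hy⟩
  · rintro ⟨h, hy⟩
    exact ⟨⟨p.1, h⟩, p.2, hy, rfl⟩

theorem rc_phi_psi (n N : ℕ) (ν : RCConf n) (h : ∀ a, ∀ p ∈ ν a, p.1 < N) :
    rcPhi n N (fun i => ((ν i.1).filter (fun p => p.1 = i.2.1)).map Prod.snd) = ν := by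
  funext a
  have h1 : rcPhi n N (fun i => ((ν i.1).filter (fun p => p.1 = i.2.1)).map Prod.snd) a
      = ∑ j : Fin N, (ν a).filter (fun p => p.1 = j.1) := by
    unfold rcPhi
    refine Finset.sum_congr rfl fun j _ => ?_
    rw [Multiset.map_map]
    conv_rhs => rw [← Multiset.map_id ((ν a).filter (fun p => p.1 = j.1))]
    refine Multiset.map_congr rfl fun p hp => ?_
    have := (Multiset.mem_filter.1 hp).2
    simp [← this]
  rw [h1]
  ext p
  rw [Multiset.count_sum']
  simp only [Multiset.count_filter]
  by_cases hp : p ∈ ν a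
  · rw [Finset.sum_eq_single ⟨p.1, h a p hp⟩]
    · simp
    · intro b _ hb
      rw [if_neg]
      intro hh; exact hb (Fin.ext hh.symm)
    · simp
  · rw [Multiset.count_eq_zero_of_notMem hp]; simp

/-- The fibre over a multiplicity array. -/
def rcFiber (n L : ℕ) (r s : Fin L → ℕ) (M : Fin (n - 1) → ℕ → ℤ)
    (m : Fin (n - 1) → ℕ → ℕ) : Set (RCConf n) :=
  {ν | rcMult ν = m ∧ ∀ a, ∀ p ∈ ν a, M a p.1 ≤ p.2 ∧ p.2 ≤ vacM n L r s m a p.1}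

/-- The index set of the fibre. -/
noncomputable def rcIdx (n L : ℕ) (r s : Fin L → ℕ) (M : Fin (n - 1) → ℕ → ℤ)
    (m : Fin (n - 1) → ℕ → ℕ) (N : ℕ) : Finset (Fin (n - 1) × Fin N → Multiset ℤ) :=
  Fintype.piFinset fun i =>
    rcMs (M i.1 i.2.1) (vacM n L r s m i.1 i.2.1 - M i.1 i.2.1 + 1).toNat (m i.1 i.2.1)

theorem rc_fiber_eq (n L : ℕ) (r s : Fin L → ℕ) (M : Fin (n - 1) → ℕ → ℤ)
    (m : Fin (n - 1) → ℕ → ℕ) (N : ℕ) (hN : ∀ a j, N ≤ j → m a j = 0) :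
    rcFiber n L r s M m
      = ↑((rcIdx n L r s M m N).map ⟨rcPhi n N, rc_phi_inj n N⟩) := by
  ext ν
  simp only [Finset.coe_map, Function.Embedding.coeFn_mk, Set.mem_image, Finset.mem_coe,
    rcIdx, Fintype.mem_piFinset, rc_mem_ms]
  constructor
  · rintro ⟨rfl, h2⟩
    have hlt : ∀ a, ∀ p ∈ ν a, p.1 < N := by
      intro a p hp
      by_contra hcon
      have := hN a p.1 (by omega)
      rw [rcMult, Multiset.count_eq_zero] at this
      exact this (Multiset.mem_map_of_mem _ hp)
    refine ⟨_, ?_, rc_phi_psi n N ν hlt⟩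
    rintro ⟨a, j⟩
    constructor
    · simp only [Multiset.card_map, rcMult, Multiset.count_map]
      congr 1
      refine Multiset.filter_congr fun p _ => ?_
      exact eq_comm
    · intro x hx
      obtain ⟨p, hp, rfl⟩ := Multiset.mem_map.1 hx
      obtain ⟨hp1, hp2⟩ := Multiset.mem_filter.1 hp
      have := h2 a p hp1
      simp only at hp2 ⊢
      rw [← hp2]
      omega
  · rintro ⟨x, hx, rfl⟩
    constructor
    · funext a j
      rw [rc_mult_phi]
      split_ifs with h
      · exact (hx (a, ⟨j, h⟩)).1
      · exact (hN a j (by omega)).symm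
    · intro a p hp
      rw [rc_mem_phi] at hp
      obtain ⟨h, hp⟩ := hp
      have := (hx (a, ⟨p.1, h⟩)).2 p.2 hp
      simp only at this
      omega

open LaurentPolynomial in
theorem rc_fiber_sum (n L : ℕ) (r s : Fin L → ℕ) (M : Fin (n - 1) → ℕ → ℤ)
    (m : Fin (n - 1) → ℕ → ℕ) (N : ℕ) (hN : ∀ a j, N ≤ j → m a j = 0)
    (hm : ∀ a j, 0 < m a j → M a j ≤ vacM n L r s m a j) :
    (∑ᶠ ν ∈ rcFiber n L r s M m, (T (cc n ν) : LaurentPolynomial ℤ))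
      = T (ccM n m + ∑ a : Fin (n - 1), ∑ᶠ j : ℕ, M a j * m a j)
            * ∏ a : Fin (n - 1), ∏ᶠ j : ℕ,
                (Polynomial.toLaurent
                  (qbinomPoly ((vacM n L r s m a j - M a j + m a j).toNat) (m a j))
                  : LaurentPolynomial ℤ) := by
  have hfib := rc_fiber_eq n L r s M m N hN
  have hmem : ∀ x ∈ rcIdx n L r s M m N, rcMult (rcPhi n N x) = m := by
    intro x hx
    have : rcPhi n N x ∈ rcFiber n L r s M m := by
      rw [hfib]
      exact Finset.mem_coe.2 (Finset.mem_map.2 ⟨x, hx, rfl⟩)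
    exact this.1
  rw [hfib, finsum_mem_coe_finset, Finset.sum_map]
  have step : ∀ x ∈ rcIdx n L r s M m N,
      (T (cc n (rcPhi n N x)) : LaurentPolynomial ℤ)
        = T (ccM n m) * ∏ i : Fin (n - 1) × Fin N, T (x i).sum := by
    intro x hx
    rw [cc, rc_cc_eq, hmem x hx, T_add, ← rc_T_sum, Fintype.sum_prod_type]
    simp only [rc_rig_phi]
  simp only [Function.Embedding.coeFn_mk]
  rw [Finset.sum_congr rfl step, ← Finset.mul_sum, rcIdx, ← Finset.prod_univ_sum
    (f := fun (_ : Fin (n - 1) × Fin N) (R : Multiset ℤ) => (T R.sum : LaurentPolynomial ℤ)),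
    T_add, mul_assoc]
  congr 1
  rw [rc_T_sum, ← Finset.prod_mul_distrib, Fintype.prod_prod_type]
  refine Finset.prod_congr rfl fun a _ => ?_
  have e1 : ∑ᶠ j : ℕ, M a j * (m a j : ℤ) = ∑ j : Fin N, M a j * (m a j : ℤ) := by
    rw [finsum_eq_sum_of_support_subset (s := Finset.range N), Finset.sum_range]
    intro j hj
    by_contra hcon
    apply hj
    beta_reduce
    rw [hN a j (by simpa using hcon)]; simp
  have e2 : ∏ᶠ j : ℕ, (Polynomial.toLaurent
                  (qbinomPoly ((vacM n L r s m a j - M a j + m a j).toNat) (m a j))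
                  : LaurentPolynomial ℤ) = ∏ j : Fin N, Polynomial.toLaurent
                  (qbinomPoly ((vacM n L r s m a j - M a j + m a j).toNat) (m a j)) := by
    rw [finprod_eq_prod_of_mulSupport_subset (s := Finset.range N), Finset.prod_range]
    intro j hj
    by_contra hcon
    apply hj
    beta_reduce
    rw [hN a j (by simpa using hcon), rc_qb_zero]; simp
  rw [e1, e2, rc_T_sum, ← Finset.prod_mul_distrib]
  refine Finset.prod_congr rfl fun j _ => ?_
  rw [rc_sum_ms]
  congr 2
  rcases Nat.eq_zero_or_pos (m a j) with h0 | h0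
  · simp only [h0, rc_qb_zero]
  · have := hm a j h0
    congr 1
    dsimp only
    omega

theorem rc_bound (f : ℕ → ℕ) (hf : (Function.support f).Finite) (j : ℕ) :
    (j : ℤ) * f j ≤ ∑ᶠ j : ℕ, (j : ℤ) * f j := by
  have h : (Function.support fun j : ℕ => (j : ℤ) * (f j : ℤ)).Finite := by
    refine hf.subset fun k hk => ?_
    simp only [Function.mem_support] at hk ⊢
    intro h0; apply hk; simp [h0]
  exact single_le_finsum j h (fun k => by positivity)

/-- The generating function of unrestricted rigged
configurations by cocharge admits the explicit fermionic (Gaussian-binomial)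
form
`∑_{(ν,J) ∈ RC(λ,B)} q^{cc(ν,J)}
  = ∑_m q^{cc(m) + ∑ M_j^{(a)} m_j^{(a)}} ∏_{a,j} [p_j^{(a)} − M_j^{(a)} + m_j^{(a)}, m_j^{(a)}]_q`,
where the outer sum runs over all collections of nonnegative integers
`m = (m_j^{(a)})` (finitely supported, `j ≥ 1`) satisfying the size
constraints `∑_j j·m_j^{(a)} = ∑_i s_i min(r_i,a) − ∑_{k=1}^a λ_k` and the
nonnegativity `p_j^{(a)} − M_j^{(a)} ≥ 0` whenever `m_j^{(a)} > 0`.  The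
identity is stated in the ring of Laurent polynomials `ℤ[q,q⁻¹]` (cocharge
can be negative), and holds for any choice of lower bounds `M`, in particular
for the Deka–Schilling lower bounds. -/
theorem riggedConfiguration_genFun_eq_gaussian_sum
    (n L : ℕ) (hn : 2 ≤ n) (r s : Fin L → ℕ)
    (hr : ∀ i, 1 ≤ r i ∧ r i ≤ n - 1) (hs : ∀ i, 1 ≤ s i)
    (lam : Fin n → ℕ) (hlam : ∑ k, lam k = ∑ i, r i * s i)
    (M : Fin (n - 1) → ℕ → ℤ) :
    (∑ᶠ ν ∈ {ν : RCConf n | IsURC n L r s M (fun k => (lam k : ℤ)) ν},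
        (LaurentPolynomial.T (cc n ν) : LaurentPolynomial ℤ))
      = ∑ᶠ m ∈ {m : Fin (n - 1) → ℕ → ℕ |
            (∀ a, (Function.support (m a)).Finite) ∧ (∀ a, m a 0 = 0) ∧
            (∀ a : Fin (n - 1), (∑ᶠ j : ℕ, (j : ℤ) * m a j)
              = (∑ i, (s i : ℤ) * min (r i : ℤ) (a.1 + 1))
                - ∑ k : Fin n, (if k.1 ≤ a.1 then (lam k : ℤ) else 0)) ∧
            (∀ a j, 0 < m a j → M a j ≤ vacM n L r s m a j)},
          (LaurentPolynomial.T (ccM n m + ∑ a : Fin (n - 1), ∑ᶠ j : ℕ, M a j * m a j)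
            * ∏ a : Fin (n - 1), ∏ᶠ j : ℕ,
                (Polynomial.toLaurent
                  (qbinomPoly ((vacM n L r s m a j - M a j + m a j).toNat) (m a j))
                  : LaurentPolynomial ℤ)) := by
  classical
  set S : Set (Fin (n - 1) → ℕ → ℕ) := {m : Fin (n - 1) → ℕ → ℕ |
            (∀ a, (Function.support (m a)).Finite) ∧ (∀ a, m a 0 = 0) ∧
            (∀ a : Fin (n - 1), (∑ᶠ j : ℕ, (j : ℤ) * m a j)
              = (∑ i, (s i : ℤ) * min (r i : ℤ) (a.1 + 1))
                - ∑ k : Fin n, (if k.1 ≤ a.1 then (lam k : ℤ) else 0)) ∧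
            (∀ a j, 0 < m a j → M a j ≤ vacM n L r s m a j)} with hS
  obtain ⟨N, hN⟩ : ∃ N : ℕ, ∀ m ∈ S, ∀ a j, m a j < N ∧ (N ≤ j → m a j = 0) := by
    let K : Fin (n - 1) → ℤ := fun a => (∑ i, (s i : ℤ) * min (r i : ℤ) (a.1 + 1))
                - ∑ k : Fin n, (if k.1 ≤ a.1 then (lam k : ℤ) else 0)
    refine ⟨(∑ a, (K a).toNat) + 1, ?_⟩
    rintro m ⟨h1, h2, h3, -⟩ a j
    have hb := rc_bound (m a) (h1 a) j
    rw [h3 a] at hb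
    change _ ≤ K a at hb
    have hK : (K a).toNat ≤ ∑ a, (K a).toNat :=
      Finset.single_le_sum (f := fun a => (K a).toNat) (fun _ _ => Nat.zero_le _)
        (Finset.mem_univ a)
    have hb' : j * m a j ≤ (K a).toNat := by
      have : ((j * m a j : ℕ) : ℤ) ≤ K a := by push_cast; exact hb
      omega
    rcases Nat.eq_zero_or_pos j with rfl | hj
    · rw [h2 a]; simp
    · have g1 : m a j ≤ j * m a j := Nat.le_mul_of_pos_left _ hj
      refine ⟨by omega, fun hle => ?_⟩
      by_contra hne
      have g2 : j ≤ j * m a j := Nat.le_mul_of_pos_right _ (Nat.pos_of_ne_zero hne)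
      omega
  have hfinS : S.Finite := by
    refine Set.Finite.subset (Set.finite_range
      (fun g : Fin (n - 1) → Fin N → Fin N =>
        fun a (j : ℕ) => if h : j < N then (g a ⟨j, h⟩ : ℕ) else 0)) ?_
    intro m hm
    refine ⟨fun a j => ⟨m a j, (hN m hm a j).1⟩, ?_⟩
    funext a j
    by_cases h : j < N
    · simp [h]
    · simp [h, (hN m hm a j).2 (by omega)]
  have hU : {ν : RCConf n | IsURC n L r s M (fun k => (lam k : ℤ)) ν}
      = ⋃ m ∈ S, rcFiber n L r s M m := by
    ext ν
    simp only [Set.mem_setOf_eq, Set.mem_iUnion, exists_prop]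
    have hsz : ∀ a, ((ν a).map fun p => (p.1 : ℤ)).sum = ∑ᶠ j : ℕ, (j : ℤ) * rcMult ν a j :=
      fun a => rc_map_eq ν a (fun j => (j : ℤ))
    constructor
    · rintro ⟨h1, h2, h3⟩
      simp only [rc_vac_eq] at h3
      refine ⟨rcMult ν, ⟨?_, ?_, ?_, ?_⟩, rfl, h3⟩
      · intro a
        refine (((ν a).map Prod.fst).toFinset.finite_toSet).subset fun k hk => ?_
        rw [Finset.mem_coe, Multiset.mem_toFinset]
        exact Multiset.count_ne_zero.1 hk
      · intro a
        rw [rcMult, Multiset.count_eq_zero]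
        intro h
        obtain ⟨p, hp, hp0⟩ := Multiset.mem_map.1 h
        have := h1 a p hp
        omega
      · intro a
        rw [← hsz]
        exact h2 a
      · intro a j hj
        rw [rcMult, Multiset.count_pos] at hj
        obtain ⟨p, hp, rfl⟩ := Multiset.mem_map.1 hj
        exact (h3 a p hp).1.trans (h3 a p hp).2
    · rintro ⟨m, ⟨h1, h2, h3, h4⟩, rfl, h6⟩
      refine ⟨?_, ?_, ?_⟩
      · intro a p hp
        by_contra hcon
        have h0 := h2 a
        rw [rcMult, Multiset.count_eq_zero] at h0
        apply h0
        have : p.1 = 0 := by omega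
        rw [← this]
        exact Multiset.mem_map_of_mem _ hp
      · intro a
        rw [hsz]
        exact h3 a
      · simp only [rc_vac_eq]
        exact h6
  rw [hU, finsum_mem_biUnion]
  · refine finsum_mem_congr rfl fun m hm => ?_
    exact rc_fiber_sum n L r s M m N (fun a j => (hN m hm a j).2) hm.2.2.2
  · intro m _ m' _ hne
    refine Set.disjoint_left.2 fun ν h1 h2 => hne ?_
    exact h1.1.symm.trans h2.1
  · exact hfinS
  · intro m hm
    rw [rc_fiber_eq n L r s M m N (fun a j => (hN m hm a j).2)]
    exact Finset.finite_toSet _
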